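/- Let λ > 1 and let ρ be a probability density on the d-dimensional torus T^d with 1/λ ≤ ρ ≤ λ (as holds for the solution ρ̄_t of the McKean–Vlasov equation at every time t ≥ 0, under the assumptions on K and ρ̄₀). Then for every positive smooth function f on T^d: Ent_ρ(f) ≤ (λ²/(8π²)) ∫_{T^d} (|∇f|²/f) ρ(x) dx. -/

import Mathlib

open MeasureTheory Real Set

noncomputable section

theorem wirtinger_aux (w w' : ℝ → ℝ) (hw : ∀ x, HasDerivAt w (w' x) x) (hw' : Continuous w')
    (hper : w 1 = w 0) (hmean : ∫ x in (0:ℝ)..1, w x = 0) :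
    4 * π ^ 2 * ∫ x in (0:ℝ)..1, w x ^ 2 ≤ ∫ x in (0:ℝ)..1, w' x ^ 2 := by
  have hwc : Continuous w := continuous_iff_continuousAt.2 fun x => (hw x).continuousAt
  have key : ∀ g : ℝ → ℝ, Continuous g → HasSum (fun i : ℤ =>
      ‖fourierCoeffOn (zero_lt_one (α := ℝ)) (fun x => (g x : ℂ)) i‖ ^ 2)
      (∫ x in (0:ℝ)..1, g x ^ 2) := by
    intro g hg
    have hm : MemLp (fun x => (g x : ℂ)) 2 (volume.restrict (Ioc (0:ℝ) 1)) := by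
      have hc : Continuous (fun x => (g x : ℂ)) := by fun_prop
      obtain ⟨C, hC⟩ := (isCompact_Icc (a := (0:ℝ)) (b := 1)).exists_bound_of_continuousOn
        hc.continuousOn
      refine MemLp.of_bound hc.aestronglyMeasurable C ?_
      refine (ae_restrict_iff' measurableSet_Ioc).2 (Filter.Eventually.of_forall fun x hx => ?_)
      exact hC x (Ioc_subset_Icc_self hx)
    have := hasSum_sq_fourierCoeffOn (zero_lt_one (α := ℝ)) hm
    simpa using this
  have h1 := key w hwc
  have h2 := key w' hw'
  refine hasSum_le (fun n => ?_) (h1.mul_left (4 * π ^ 2)) h2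
  by_cases hn : n = 0
  · subst hn
    have : fourierCoeffOn (zero_lt_one (α := ℝ)) (fun x => (w x : ℂ)) 0 = 0 := by
      rw [fourierCoeffOn_eq_integral]
      have h0 : ∫ x in (0:ℝ)..1, (w x : ℂ) = 0 := by
        rw [intervalIntegral.integral_ofReal, hmean]; simp
      simp [h0]
    rw [this]; simp; try positivity
  · have := fourierCoeffOn_of_hasDerivAt (zero_lt_one (α := ℝ)) (f := fun x => (w x : ℂ))
      (f' := fun x => (w' x : ℂ)) hn (fun x _ => (hw x).ofReal_comp)
      ((by fun_prop : Continuous (fun x => (w' x : ℂ))).intervalIntegrable _ _)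
    rw [this]
    simp only [hper, sub_self, mul_zero, zero_sub, sub_zero, Complex.ofReal_one, Complex.ofReal_zero, one_mul]
    simp only [norm_mul, norm_div, norm_neg, mul_pow]
    simp only [norm_one, Complex.norm_ofNat, Complex.norm_I, Complex.norm_real, Complex.norm_intCast]
    have hn1 : (1:ℝ) ≤ |(n:ℝ)| := by
      have := Int.one_le_abs hn
      exact_mod_cast this
    rw [Real.norm_of_nonneg pi_pos.le]
    simp
    set A := ‖fourierCoeffOn (zero_lt_one (α := ℝ)) (fun x => (w' x : ℂ)) n‖ ^ 2 with hA
    have hA0 : 0 ≤ A := by positivity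
    have hn2 : (1:ℝ) ≤ (n:ℝ)^2 := by rw [← sq_abs]; nlinarith
    have hn3 : (1:ℝ) ≤ |(n:ℝ)|^2 := by rw [sq_abs]; exact hn2
    field_simp
    nlinarith

theorem hasDerivAt_setIntegral_cont {X : Type*} [TopologicalSpace X] [T2Space X] [MeasurableSpace X]
    [OpensMeasurableSpace X] [SecondCountableTopology X] (μ : Measure X) [IsFiniteMeasureOnCompacts μ]
    (K : Set X) (hK : IsCompact K) (hKm : MeasurableSet K) (F F' : ℝ → X → ℝ)
    (hF : ∀ s, Continuous (F s)) (hF' : Continuous (fun p : ℝ × X => F' p.1 p.2))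
    (hd : ∀ s x, HasDerivAt (fun r => F r x) (F' s x) s) (s : ℝ) :
    HasDerivAt (fun r => ∫ x in K, F r x ∂μ) (∫ x in K, F' s x ∂μ) s := by
  obtain ⟨C, hC⟩ := ((isCompact_Icc (a := s - 1) (b := s + 1)).prod hK).exists_bound_of_continuousOn
    hF'.continuousOn
  have hfin : μ K < ⊤ := hK.measure_lt_top
  have : IsFiniteMeasure (μ.restrict K) := ⟨by simpa using hfin⟩
  refine (hasDerivAt_integral_of_dominated_loc_of_deriv_le (μ := μ.restrict K) (F := F) (F' := F')
    (bound := fun _ => C) (Metric.ball_mem_nhds s zero_lt_one) ?_ ?_ ?_ ?_ ?_ ?_).2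
  · exact Filter.Eventually.of_forall fun r => (hF r).aestronglyMeasurable
  · exact (hF s).continuousOn.integrableOn_compact hK
  · exact (hF'.comp (Continuous.prodMk_right s)).aestronglyMeasurable
  · refine (ae_restrict_iff' hKm).2 (Filter.Eventually.of_forall fun x hx r hr => ?_)
    rw [Real.ball_eq_Ioo] at hr
    exact hC (r, x) ⟨⟨hr.1.le, hr.2.le⟩, hx⟩
  · exact integrable_const _
  · exact Filter.Eventually.of_forall fun x r _ => hd r x

theorem core_ineq (V V1 V2 V3 : ℝ → ℝ) (h0 : ∀ x, HasDerivAt V (V1 x) x)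
    (h1 : ∀ x, HasDerivAt V1 (V2 x) x) (h2 : ∀ x, HasDerivAt V2 (V3 x) x) (h3 : Continuous V3)
    (hpos : ∀ x, 0 < V x) (p0 : V 1 = V 0) (p1 : V1 1 = V1 0) (p2 : V2 1 = V2 0) :
    ∫ x in (0:ℝ)..1, (2 * V1 x * V3 x / V x - V1 x ^ 2 * V2 x / V x ^ 2) ≤
      - (8 * π ^ 2) * ∫ x in (0:ℝ)..1, V1 x ^ 2 / V x := by
  have c0 : Continuous V := continuous_iff_continuousAt.2 fun x => (h0 x).continuousAt
  have c1 : Continuous V1 := continuous_iff_continuousAt.2 fun x => (h1 x).continuousAt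
  have c2 : Continuous V2 := continuous_iff_continuousAt.2 fun x => (h2 x).continuousAt
  have hne : ∀ x, V x ≠ 0 := fun x => (hpos x).ne'
  have hsp : ∀ x, 0 < √(V x) := fun x => Real.sqrt_pos.2 (hpos x)
  have hsne : ∀ x, √(V x) ≠ 0 := fun x => (hsp x).ne'
  have hsq : ∀ x, √(V x) ^ 2 = V x := fun x => Real.sq_sqrt (hpos x).le
  set w : ℝ → ℝ := fun x => V1 x / (2 * √(V x)) with hw
  set w' : ℝ → ℝ := fun x => V2 x / (2 * √(V x)) - V1 x ^ 2 / (4 * V x * √(V x)) with hw'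
  have dv : ∀ x, HasDerivAt (fun y => √(V y)) (w x) x := fun x => (h0 x).sqrt (hne x)
  have dw : ∀ x, HasDerivAt w (w' x) x := by
    intro x
    have := (h1 x).div ((dv x).const_mul 2) (by have := hsne x; positivity)
    refine HasDerivAt.congr_deriv this ?_
    simp only [hw, hw']
    have e := hsq x
    have := hsne x
    have := hne x
    rw [← e]
    rw [Real.sqrt_sq (hsp x).le]
    field_simp
    ring
  have cs : Continuous (fun x => √(V x)) := c0.sqrt
  have cw : Continuous w := continuous_iff_continuousAt.2 fun x => (dw x).continuousAt
  have cw' : Continuous w' := by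
    have n1 : ∀ x, 2 * √(V x) ≠ 0 := fun x => by have := hsne x; positivity
    have n2 : ∀ x, 4 * V x * √(V x) ≠ 0 := fun x => by have := hsne x; have := hne x; positivity
    exact (c2.div (by fun_prop) n1).sub ((c1.pow 2).div (by fun_prop) n2)
  have hmean : ∫ x in (0:ℝ)..1, w x = 0 := by
    rw [intervalIntegral.integral_eq_sub_of_hasDerivAt (fun x _ => dv x) (cw.intervalIntegrable _ _)]
    simp [p0]
  have W := wirtinger_aux w w' dw cw' (by simp [hw, p0, p1]) hmean
  have e1 : ∫ x in (0:ℝ)..1, V1 x ^ 2 / V x = 4 * ∫ x in (0:ℝ)..1, w x ^ 2 := by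
    rw [← intervalIntegral.integral_const_mul]
    refine intervalIntegral.integral_congr fun x _ => ?_
    simp only [hw, div_pow, mul_pow, hsq]
    have := hne x
    field_simp
    norm_num
  set B : ℝ → ℝ := fun x => 2 * V1 x * V2 x / V x - (1/3) * (V1 x ^ 3 / V x ^ 2) with hB
  set R : ℝ → ℝ := fun x => V1 x ^ 4 / (6 * V x ^ 3) with hR
  set B' : ℝ → ℝ := fun x => 2 * V2 x ^ 2 / V x + 2 * V1 x * V3 x / V x - 3 * V1 x ^ 2 * V2 x / V x ^ 2
    + (2/3) * V1 x ^ 4 / V x ^ 3 with hB'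
  have dB : ∀ x, HasDerivAt B (B' x) x := by
    intro x
    have := ((((h1 x).const_mul 2).mul (h2 x)).div (h0 x) (hne x)).sub
      ((((h1 x).pow 3).div ((h0 x).pow 2) (pow_ne_zero 2 (hne x))).const_mul (1/3))
    refine HasDerivAt.congr_deriv this ?_
    simp only [hB', Pi.mul_apply, Pi.pow_apply]
    have := hne x
    field_simp
    ring
  have cB' : Continuous B' := by
    have n2 : ∀ x, V x ^ 2 ≠ 0 := fun x => pow_ne_zero _ (hne x)
    have n3 : ∀ x, V x ^ 3 ≠ 0 := fun x => pow_ne_zero _ (hne x)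
    exact (((Continuous.div (by fun_prop) c0 hne).add (Continuous.div (by fun_prop) c0 hne)).sub
      (Continuous.div (by fun_prop) (by fun_prop) n2)).add (Continuous.div (by fun_prop) (by fun_prop) n3)
  have hB0 : ∫ x in (0:ℝ)..1, B' x = 0 := by
    rw [intervalIntegral.integral_eq_sub_of_hasDerivAt (fun x _ => dB x) (cB'.intervalIntegrable _ _)]
    simp [hB, p0, p1, p2]
  have hle : ∫ x in (0:ℝ)..1, (2 * V1 x * V3 x / V x - V1 x ^ 2 * V2 x / V x ^ 2) ≤
      ∫ x in (0:ℝ)..1, (B' x - 8 * w' x ^ 2) := by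
    have n2 : ∀ x, V x ^ 2 ≠ 0 := fun x => pow_ne_zero _ (hne x)
    refine intervalIntegral.integral_mono zero_le_one (Continuous.intervalIntegrable ?_ _ _)
      (Continuous.intervalIntegrable (by fun_prop) _ _) fun x => ?_
    · exact (Continuous.div (by fun_prop) c0 hne).sub (Continuous.div (by fun_prop) (by fun_prop) n2)
    · have key : 2 * V1 x * V3 x / V x - V1 x ^ 2 * V2 x / V x ^ 2 = B' x - 8 * w' x ^ 2 - R x := by
        simp only [hB', hw', hR]
        have e := hsq x
        have a1 := hsne x
        generalize √(V x) = q at *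
        rw [← e]
        field_simp
        ring
      have hR0 : 0 ≤ R x := by
        have := hpos x
        simp only [hR]; positivity
      simp only [key]
      linarith
  rw [intervalIntegral.integral_sub (cB'.intervalIntegrable _ _)
    (Continuous.intervalIntegrable (by fun_prop) _ _), hB0, intervalIntegral.integral_const_mul] at hle
  rw [e1]
  nlinarith

open ProbabilityTheory in
theorem gauss_stein (h h' : ℝ → ℝ) (hd : ∀ x, HasDerivAt h (h' x) x) (hc : Continuous h')
    (C : ℝ) (hb : ∀ x, |h x| ≤ C) (C' : ℝ) (hb' : ∀ x, |h' x| ≤ C') :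
    ∫ z, z * h z ∂(gaussianReal 0 1) = ∫ z, h' z ∂(gaussianReal 0 1) := by
  have hcont : Continuous h := continuous_iff_continuousAt.2 fun x => (hd x).continuousAt
  rw [integral_gaussianReal_eq_integral_smul one_ne_zero,
    integral_gaussianReal_eq_integral_smul one_ne_zero]
  set φ : ℝ → ℝ := gaussianPDFReal 0 1 with hφ
  have hdφ : ∀ x, HasDerivAt φ (-x * φ x) x := by
    intro x
    simp only [hφ, gaussianPDFReal_def]
    have := (((((hasDerivAt_id x).sub_const 0).pow 2).neg.div_const (2 * ((1:NNReal):ℝ))).exp).const_mul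
      ((√(2 * π * ((1:NNReal):ℝ)))⁻¹)
    refine HasDerivAt.congr_deriv this ?_
    simp
    ring
  have hIntg : Integrable φ := integrable_gaussianPDFReal 0 1
  have hcφ : Continuous φ := continuous_iff_continuousAt.2 fun x => (hdφ x).continuousAt
  have hIntg1 : Integrable (fun x => -x * φ x) := by
    have h1 : Integrable (fun z : ℝ => z) (gaussianReal 0 1) := by
      have := (memLp_id_gaussianReal (μ := 0) (v := 1) 1)
      exact this.integrable le_rfl
    rw [gaussianReal_of_var_ne_zero _ one_ne_zero,
      integrable_withDensity_iff (measurable_gaussianPDF 0 1) (ae_of_all _ fun _ => gaussianPDF_lt_top)] at h1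
    simpa [hφ, toReal_gaussianPDF] using h1.neg
  have := integral_mul_deriv_eq_deriv_mul_of_integrable (u := h) (v := φ) (u' := h')
    (v' := fun x => -x * φ x) (fun x _ => hd x) (fun x _ => hdφ x)
    (hIntg1.bdd_mul hcont.aestronglyMeasurable (c := C) (ae_of_all _ hb))
    (hIntg.bdd_mul hc.aestronglyMeasurable (c := C') (ae_of_all _ hb'))
    (hIntg.bdd_mul hcont.aestronglyMeasurable (c := C) (ae_of_all _ hb))
  have e : ∫ x, φ x • h' x = ∫ x, h' x * φ x := by simp [mul_comm]
  rw [e, ← neg_eq_iff_eq_neg.2 this, ← integral_neg]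
  refine integral_congr_ae (ae_of_all _ fun x => ?_)
  simp; ring

open ProbabilityTheory in
/-- heat flow in the standard deviation variable -/
def heatH (g : ℝ → ℝ) (s x : ℝ) : ℝ := ∫ z, g (x + s * z) ∂(gaussianReal 0 1)

open ProbabilityTheory in
theorem gauss_int_id : Integrable (fun z : ℝ => z) (gaussianReal 0 1) :=
  (memLp_id_gaussianReal (μ := 0) (v := 1) 1).integrable le_rfl

open ProbabilityTheory in
theorem gauss_int_bdd (g : ℝ → ℝ) (hg : Continuous g) (C : ℝ) (hb : ∀ x, |g x| ≤ C) :
    Integrable g (gaussianReal 0 1) :=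
  Integrable.of_bound hg.aestronglyMeasurable C (ae_of_all _ hb)

theorem heatH_cont (g : ℝ → ℝ) (hg : Continuous g) (C : ℝ) (hb : ∀ x, |g x| ≤ C) :
    Continuous (fun p : ℝ × ℝ => heatH g p.1 p.2) := by
  unfold heatH
  refine continuous_of_dominated (bound := fun _ => C) (fun p => ?_) (fun p => ?_) (integrable_const _) ?_
  · exact Continuous.aestronglyMeasurable (by fun_prop)
  · exact ae_of_all _ fun z => hb _
  · exact ae_of_all _ fun z => by fun_prop

theorem heatH_dx (g g' : ℝ → ℝ) (hd : ∀ x, HasDerivAt g (g' x) x) (hc : Continuous g')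
    (C : ℝ) (hb : ∀ x, |g x| ≤ C) (C' : ℝ) (hb' : ∀ x, |g' x| ≤ C') (s x : ℝ) :
    HasDerivAt (heatH g s) (heatH g' s x) x := by
  have hg : Continuous g := continuous_iff_continuousAt.2 fun x => (hd x).continuousAt
  unfold heatH
  refine (hasDerivAt_integral_of_dominated_loc_of_deriv_le (F := fun x z => g (x + s * z))
    (F' := fun x z => g' (x + s * z)) (bound := fun _ => C') Filter.univ_mem ?_ ?_ ?_ ?_ ?_ ?_).2
  · exact Filter.Eventually.of_forall fun r => Continuous.aestronglyMeasurable (by fun_prop)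
  · exact gauss_int_bdd _ (by fun_prop) C fun z => hb _
  · exact Continuous.aestronglyMeasurable (by fun_prop)
  · exact ae_of_all _ fun z y _ => hb' _
  · exact integrable_const _
  · exact ae_of_all _ fun z y _ => by
      exact HasDerivAt.congr_deriv ((hd (y + s * z)).comp y ((hasDerivAt_id y).add_const (s * z))) (by simp)

theorem heatH_ds_aux (g g' : ℝ → ℝ) (hd : ∀ x, HasDerivAt g (g' x) x) (hc : Continuous g')
    (C : ℝ) (hb : ∀ x, |g x| ≤ C) (C' : ℝ) (hb' : ∀ x, |g' x| ≤ C') (s x : ℝ) :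
    HasDerivAt (fun r => heatH g r x)
      (∫ z, z * g' (x + s * z) ∂(ProbabilityTheory.gaussianReal 0 1)) s := by
  have hg : Continuous g := continuous_iff_continuousAt.2 fun x => (hd x).continuousAt
  unfold heatH
  refine (hasDerivAt_integral_of_dominated_loc_of_deriv_le (F := fun s z => g (x + s * z))
    (F' := fun s z => z * g' (x + s * z)) (bound := fun z => ‖z‖ * C') Filter.univ_mem ?_ ?_ ?_ ?_ ?_ ?_).2
  · exact Filter.Eventually.of_forall fun r => Continuous.aestronglyMeasurable (by fun_prop)
  · exact gauss_int_bdd _ (by fun_prop) C fun z => hb _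
  · exact Continuous.aestronglyMeasurable (by fun_prop)
  · refine ae_of_all _ fun z y _ => ?_
    rw [norm_mul]
    exact mul_le_mul_of_nonneg_left (hb' _) (norm_nonneg _)
  · exact gauss_int_id.norm.mul_const _
  · refine ae_of_all _ fun z y _ => ?_
    have := (hd (x + y * z)).comp y (((hasDerivAt_id y).mul_const z).const_add x)
    refine HasDerivAt.congr_deriv this ?_
    simp [mul_comm]

theorem heatH_stein (g g' : ℝ → ℝ) (hd : ∀ x, HasDerivAt g (g' x) x) (hc : Continuous g')
    (C : ℝ) (hb : ∀ x, |g x| ≤ C) (C' : ℝ) (hb' : ∀ x, |g' x| ≤ C') (s x : ℝ) :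
    ∫ z, z * g (x + s * z) ∂(ProbabilityTheory.gaussianReal 0 1) = s * heatH g' s x := by
  have hh : ∀ z, HasDerivAt (fun z => g (x + s * z)) (s * g' (x + s * z)) z := by
    intro z
    have := (hd (x + s * z)).comp z (((hasDerivAt_id z).const_mul s).const_add x)
    refine HasDerivAt.congr_deriv this ?_
    simp [mul_comm]
  rw [gauss_stein (fun z => g (x + s * z)) _ hh (by fun_prop) C (fun z => hb _) (|s| * C') ?_]
  · rw [integral_const_mul]; rfl
  · intro z
    rw [abs_mul]
    exact mul_le_mul_of_nonneg_left (hb' _) (abs_nonneg _)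

theorem hasDerivAt_interval_cont (F F' : ℝ → ℝ → ℝ)
    (hF : ∀ s, Continuous (F s)) (hF' : Continuous (fun p : ℝ × ℝ => F' p.1 p.2))
    (hd : ∀ s x, HasDerivAt (fun r => F r x) (F' s x) s) (s : ℝ) :
    HasDerivAt (fun r => ∫ x in (0:ℝ)..1, F r x) (∫ x in (0:ℝ)..1, F' s x) s := by
  have := hasDerivAt_setIntegral_cont volume (Icc (0:ℝ) 1) isCompact_Icc measurableSet_Icc F F' hF hF' hd s
  simpa only [intervalIntegral.integral_of_le zero_le_one, integral_Icc_eq_integral_Ioc] using this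

theorem per_bdd (g : ℝ → ℝ) (hg : Continuous g) (hp : ∀ x, g (x + 1) = g x) :
    ∃ C, ∀ x, |g x| ≤ C := by
  obtain ⟨C, hC⟩ := (isCompact_Icc (a := (0:ℝ)) (b := 1)).exists_bound_of_continuousOn hg.continuousOn
  refine ⟨C, fun x => ?_⟩
  obtain ⟨y, hy, e⟩ := Function.Periodic.exists_mem_Ico₀ (f := g) (c := 1) hp zero_lt_one x
  rw [e]
  exact hC y (Ico_subset_Icc_self hy)

theorem per_deriv (g : ℝ → ℝ) (hg : ContDiff ℝ (⊤ : ℕ∞) g) (hp : ∀ x, g (x + 1) = g x) :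
    ContDiff ℝ (⊤ : ℕ∞) (deriv g) ∧ (∀ x, deriv g (x + 1) = deriv g x) ∧
      (∀ x, HasDerivAt g (deriv g x) x) := by
  refine ⟨(contDiff_infty_iff_deriv.1 hg).2, fun x => ?_, fun x => ?_⟩
  · rw [← deriv_comp_add_const]
    congr 1
    exact funext hp
  · exact ((contDiff_infty_iff_deriv.1 hg).1 x).hasDerivAt

theorem heatH_per (g : ℝ → ℝ) (hp : ∀ x, g (x + 1) = g x) (s : ℝ) : heatH g s 1 = heatH g s 0 := by
  unfold heatH
  congr 1
  ext z
  rw [← hp (0 + s * z)]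
  congr 1; ring

theorem lsi_one (f : ℝ → ℝ) (hf : ContDiff ℝ (⊤ : ℕ∞) f) (hp : ∀ x, f (x + 1) = f x)
    (hpos : ∀ x, 0 < f x) :
    (∫ x in (0:ℝ)..1, f x * Real.log (f x)) -
        (∫ x in (0:ℝ)..1, f x) * Real.log (∫ x in (0:ℝ)..1, f x) ≤
      (1 / (8 * π ^ 2)) * ∫ x in (0:ℝ)..1, (deriv f x) ^ 2 / f x := by
  obtain ⟨sm1, q1, d0⟩ := per_deriv f hf hp
  set f1 := deriv f with hf1
  obtain ⟨sm2, q2, d1⟩ := per_deriv f1 sm1 q1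
  set f2 := deriv f1 with hf2
  obtain ⟨sm3, q3, d2⟩ := per_deriv f2 sm2 q2
  set f3 := deriv f2 with hf3
  have c0 := hf.continuous
  have c1 := sm1.continuous
  have c2 := sm2.continuous
  have c3 := sm3.continuous
  obtain ⟨C0, b0⟩ := per_bdd f c0 hp
  obtain ⟨C1, b1⟩ := per_bdd f1 c1 q1
  obtain ⟨C2, b2⟩ := per_bdd f2 c2 q2
  obtain ⟨C3, b3⟩ := per_bdd f3 c3 q3
  obtain ⟨Ci, bi⟩ := per_bdd (fun x => (f x)⁻¹) (c0.inv₀ fun x => (hpos x).ne') (fun x => by simp only [hp])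
  have hCi : 0 < Ci := lt_of_lt_of_le (abs_pos.2 (inv_ne_zero (hpos 0).ne')) (bi 0)
  have hlow : ∀ x, Ci⁻¹ ≤ f x := fun x => by
    have := bi x
    rw [abs_of_pos (inv_pos.2 (hpos x))] at this
    exact inv_le_of_inv_le₀ (hpos x) this
  -- heat flow
  set V := heatH f with hV
  set V1 := heatH f1 with hV1
  set V2 := heatH f2 with hV2
  set V3 := heatH f3 with hV3
  have hVpos : ∀ s x, 0 < V s x := fun s x => by
    refine lt_of_lt_of_le (inv_pos.2 hCi) ?_
    have : ∫ z, Ci⁻¹ ∂(ProbabilityTheory.gaussianReal 0 1) ≤ V s x :=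
      integral_mono (integrable_const _)
        (gauss_int_bdd _ (by fun_prop) C0 fun z => b0 _) (fun z => hlow _)
    simpa using this
  have hVne : ∀ s x, V s x ≠ 0 := fun s x => (hVpos s x).ne'
  have cV : Continuous (fun p : ℝ × ℝ => V p.1 p.2) := heatH_cont f c0 C0 b0
  have cV1 : Continuous (fun p : ℝ × ℝ => V1 p.1 p.2) := heatH_cont f1 c1 C1 b1
  have cV2 : Continuous (fun p : ℝ × ℝ => V2 p.1 p.2) := heatH_cont f2 c2 C2 b2
  have cV3 : Continuous (fun p : ℝ × ℝ => V3 p.1 p.2) := heatH_cont f3 c3 C3 b3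
  have cVs : ∀ s, Continuous (V s) := fun s => cV.comp (Continuous.prodMk_right s)
  have cV1s : ∀ s, Continuous (V1 s) := fun s => cV1.comp (Continuous.prodMk_right s)
  have cV2s : ∀ s, Continuous (V2 s) := fun s => cV2.comp (Continuous.prodMk_right s)
  have cV3s : ∀ s, Continuous (V3 s) := fun s => cV3.comp (Continuous.prodMk_right s)
  have dx0 : ∀ s x, HasDerivAt (V s) (V1 s x) x := heatH_dx f f1 d0 c1 C0 b0 C1 b1
  have dx1 : ∀ s x, HasDerivAt (V1 s) (V2 s x) x := heatH_dx f1 f2 d1 c2 C1 b1 C2 b2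
  have dx2 : ∀ s x, HasDerivAt (V2 s) (V3 s x) x := heatH_dx f2 f3 d2 c3 C2 b2 C3 b3
  have ds0 : ∀ s x, HasDerivAt (fun r => V r x) (s * V2 s x) s := fun s x => by
    rw [hV2, ← heatH_stein f1 f2 d1 c2 C1 b1 C2 b2 s x]
    exact heatH_ds_aux f f1 d0 c1 C0 b0 C1 b1 s x
  have ds1 : ∀ s x, HasDerivAt (fun r => V1 r x) (s * V3 s x) s := fun s x => by
    rw [hV3, ← heatH_stein f2 f3 d2 c3 C2 b2 C3 b3 s x]
    exact heatH_ds_aux f1 f2 d1 c2 C1 b1 C2 b2 s x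
  have p0 : ∀ s, V s 1 = V s 0 := heatH_per f hp
  have p1 : ∀ s, V1 s 1 = V1 s 0 := heatH_per f1 q1
  have p2 : ∀ s, V2 s 1 = V2 s 0 := heatH_per f2 q2
  have V0 : V 0 = f := by ext x; simp [hV, heatH]
  have V10 : V1 0 = f1 := by ext x; simp [hV1, heatH]
  have clog : Continuous (fun p : ℝ × ℝ => Real.log (V p.1 p.2)) := cV.log fun p => hVne _ _
  have clogs : ∀ s, Continuous (fun x => Real.log (V s x)) := fun s => (cVs s).log fun p => hVne _ _
  set m := ∫ x in (0:ℝ)..1, f x with hm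
  -- mass
  have hmass : ∀ s, ∫ x in (0:ℝ)..1, V s x = m := by
    have hder : ∀ s, HasDerivAt (fun r => ∫ x in (0:ℝ)..1, V r x) 0 s := fun s => by
      refine HasDerivAt.congr_deriv (hasDerivAt_interval_cont V (fun s x => s * V2 s x) cVs
        (by fun_prop) ds0 s) ?_
      rw [intervalIntegral.integral_const_mul, intervalIntegral.integral_eq_sub_of_hasDerivAt
        (fun x _ => dx1 s x) ((cV2s s).intervalIntegrable _ _), p1]
      simp
    intro s
    have := is_const_of_deriv_eq_zero (fun s => (hder s).differentiableAt) (fun s => (hder s).deriv) s 0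
    simpa [V0] using this
  have hmpos : 0 < m := by
    refine intervalIntegral.intervalIntegral_pos_of_pos (c0.intervalIntegrable _ _) hpos zero_lt_one
  -- the functional
  set G : ℝ → ℝ := fun s => ∫ x in (0:ℝ)..1,
    (V s x * Real.log (V s x) - 1 / (8 * π ^ 2) * (V1 s x ^ 2 / V s x)) with hG
  set G' : ℝ → ℝ := fun s => ∫ x in (0:ℝ)..1, s * ((V2 s x * (Real.log (V s x) + 1)) -
    1 / (8 * π ^ 2) * (2 * V1 s x * V3 s x / V s x - V1 s x ^ 2 * V2 s x / V s x ^ 2)) with hG'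
  have dG : ∀ s, HasDerivAt G (G' s) s := by
    intro s
    refine hasDerivAt_interval_cont (fun s x => (V s x * Real.log (V s x) - 1 / (8 * π ^ 2) * (V1 s x ^ 2 / V s x)))
      (fun s x => s * ((V2 s x * (Real.log (V s x) + 1)) -
        1 / (8 * π ^ 2) * (2 * V1 s x * V3 s x / V s x - V1 s x ^ 2 * V2 s x / V s x ^ 2))) ?_ ?_ ?_ s
    · intro s
      exact ((cVs s).mul (clogs s)).sub (continuous_const.mul (((cV1s s).pow 2).div (cVs s) (hVne s)))
    · refine continuous_fst.mul ((cV2.mul (clog.add continuous_const)).sub (continuous_const.mul (Continuous.sub ?_ ?_)))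
      · exact Continuous.div (by fun_prop) cV fun p => hVne _ _
      · exact Continuous.div (by fun_prop) (by fun_prop) fun p => pow_ne_zero 2 (hVne _ _)
    · intro s x
      have := ((ds0 s x).mul ((ds0 s x).log (hVne s x))).sub
        ((((ds1 s x).pow 2).div (ds0 s x) (hVne s x)).const_mul (1 / (8 * π ^ 2)))
      refine HasDerivAt.congr_deriv this ?_
      have := hVne s x
      simp only [Pi.pow_apply]
      field_simp
      ring
  have hG'nn : ∀ s, 0 ≤ s → 0 ≤ G' s := by
    intro s hs
    simp only [hG']
    rw [intervalIntegral.integral_const_mul]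
    refine mul_nonneg hs ?_
    have i1 : IntervalIntegrable (fun x => V2 s x * (Real.log (V s x) + 1)) volume 0 1 :=
      ((cV2s s).mul ((clogs s).add continuous_const)).intervalIntegrable _ _
    have i2 : IntervalIntegrable (fun x => 1 / (8 * π ^ 2) * (2 * V1 s x * V3 s x / V s x - V1 s x ^ 2 * V2 s x / V s x ^ 2)) volume 0 1 := by
      refine Continuous.intervalIntegrable (continuous_const.mul (Continuous.sub ?_ ?_)) _ _
      · exact Continuous.div (((cV1s s).const_mul 2).mul (cV3s s)) (cVs s) (hVne s)
      · exact Continuous.div (((cV1s s).pow 2).mul (cV2s s)) ((cVs s).pow 2) fun p => pow_ne_zero 2 (hVne _ _)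
    have ci : Continuous (fun x => V1 s x ^ 2 / V s x) := ((cV1s s).pow 2).div (cVs s) (hVne s)
    rw [intervalIntegral.integral_sub i1 i2, intervalIntegral.integral_const_mul]
    have core := core_ineq (V s) (V1 s) (V2 s) (V3 s) (dx0 s) (dx1 s) (dx2 s) (cV3s s) (hVpos s)
      (p0 s) (p1 s) (p2 s)
    have ibp : ∫ x in (0:ℝ)..1, (V2 s x * (Real.log (V s x) + 1) + V1 s x ^ 2 / V s x) = 0 := by
      have hd : ∀ x, HasDerivAt (fun x => V1 s x * (Real.log (V s x) + 1))
          (V2 s x * (Real.log (V s x) + 1) + V1 s x ^ 2 / V s x) x := fun x => by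
        refine HasDerivAt.congr_deriv ((dx1 s x).mul (((dx0 s x).log (hVne s x)).add_const 1)) ?_
        ring
      rw [intervalIntegral.integral_eq_sub_of_hasDerivAt (fun x _ => hd x)
        (i1.add (ci.intervalIntegrable _ _)), p0, p1]
      simp
    rw [intervalIntegral.integral_add i1 (ci.intervalIntegrable _ _)] at ibp
    have hpi : 0 < 8 * π ^ 2 := by positivity
    have : 1 / (8 * π ^ 2) * ∫ x in (0:ℝ)..1, (2 * V1 s x * V3 s x / V s x - V1 s x ^ 2 * V2 s x / V s x ^ 2)
        ≤ 1 / (8 * π ^ 2) * (- (8 * π ^ 2) * ∫ x in (0:ℝ)..1, V1 s x ^ 2 / V s x) :=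
      mul_le_mul_of_nonneg_left core (by positivity)
    have e : 1 / (8 * π ^ 2) * (- (8 * π ^ 2) * ∫ x in (0:ℝ)..1, V1 s x ^ 2 / V s x) =
      - ∫ x in (0:ℝ)..1, V1 s x ^ 2 / V s x := by field_simp
    linarith
  have mono : MonotoneOn G (Ici 0) := by
    refine monotoneOn_of_deriv_nonneg (convex_Ici 0)
      (fun s _ => (dG s).continuousAt.continuousWithinAt)
      (fun s _ => (dG s).differentiableAt.differentiableWithinAt) fun s hs => ?_
    rw [(dG s).deriv]
    refine hG'nn s ?_
    rw [interior_Ici] at hs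
    exact le_of_lt hs
  -- decay
  set K := ∫ z, |z| * C0 ∂(ProbabilityTheory.gaussianReal 0 1) with hK
  have hdec : ∀ s, 0 < s → ∀ x, |V1 s x| ≤ K / s := by
    intro s hs x
    rw [le_div_iff₀ hs]
    have e := heatH_stein f f1 d0 c1 C0 b0 C1 b1 s x
    have : |s * V1 s x| ≤ K := by
      rw [hV1, ← e]
      rw [← Real.norm_eq_abs]
      refine norm_integral_le_of_norm_le (gauss_int_id.norm.mul_const C0) (ae_of_all _ fun z => ?_)
      rw [norm_mul]
      exact mul_le_mul_of_nonneg_left (b0 _) (norm_nonneg _)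
    rwa [abs_mul, abs_of_pos hs, mul_comm] at this
  have hup : ∀ s, 0 < s → ∀ x ∈ Icc (0:ℝ) 1, V s x ≤ m + K / s := by
    intro s hs x hx
    have hKs : 0 ≤ K / s := (abs_nonneg _).trans (hdec s hs x)
    have hpt : ∀ y ∈ Icc (0:ℝ) 1, V s x - K / s ≤ V s y := by
      intro y hy
      have h1 := (convex_univ (𝕜 := ℝ) (E := ℝ)).norm_image_sub_le_of_norm_hasDerivWithin_le (f := V s) (f' := V1 s)
        (C := K / s) (fun z _ => (dx0 s z).hasDerivWithinAt) (fun z _ => hdec s hs z)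
        (mem_univ y) (mem_univ x)
      have h2 : ‖x - y‖ ≤ 1 := by
        rw [Real.norm_eq_abs, abs_le]; constructor <;> linarith [hx.1, hx.2, hy.1, hy.2]
      have h3 : V s x - V s y ≤ K / s := (le_abs_self _).trans (h1.trans (mul_le_of_le_one_right hKs h2))
      linarith
    have := intervalIntegral.integral_mono_on zero_le_one (intervalIntegrable_const (μ := volume) (c := V s x - K / s))
      ((cVs s).intervalIntegrable 0 1) hpt
    rw [hmass] at this
    simp at this
    linarith
  have hbound : ∀ s, 0 < s → G 0 ≤ m * Real.log (m + K / s) := by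
    intro s hs
    refine (mono (mem_Ici.2 le_rfl) (mem_Ici.2 hs.le) hs.le).trans ?_
    have : G s ≤ ∫ x in (0:ℝ)..1, V s x * Real.log (m + K / s) := by
      refine intervalIntegral.integral_mono_on zero_le_one (Continuous.intervalIntegrable ?_ _ _)
        (Continuous.intervalIntegrable ((cVs s).mul continuous_const) _ _) fun x hx => ?_
      · exact ((cVs s).mul (clogs s)).sub (continuous_const.mul (((cV1s s).pow 2).div (cVs s) (hVne s)))
      · have h1 : Real.log (V s x) ≤ Real.log (m + K / s) := Real.log_le_log (hVpos s x) (hup s hs x hx)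
        have h2 := mul_le_mul_of_nonneg_left h1 (hVpos s x).le
        have h3 : 0 ≤ 1 / (8 * π ^ 2) * (V1 s x ^ 2 / V s x) := by
          have := hVpos s x
          positivity
        linarith
    rwa [intervalIntegral.integral_mul_const, hmass] at this
  have hlim : Filter.Tendsto (fun s : ℝ => m * Real.log (m + K / s)) Filter.atTop (nhds (m * Real.log m)) := by
    have h1 : Filter.Tendsto (fun s : ℝ => m + K / s) Filter.atTop (nhds (m + 0)) :=
      tendsto_const_nhds.add (tendsto_const_nhds.div_atTop Filter.tendsto_id)
    rw [add_zero] at h1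
    exact (h1.log hmpos.ne').const_mul m
  have hfin : G 0 ≤ m * Real.log m := by
    refine ge_of_tendsto hlim ?_
    filter_upwards [Filter.eventually_gt_atTop 0] with s hs using hbound s hs
  have hG0 : G 0 = (∫ x in (0:ℝ)..1, f x * Real.log (f x)) - 1 / (8 * π ^ 2) * ∫ x in (0:ℝ)..1, f1 x ^ 2 / f x := by
    simp only [hG, V0, V10]
    rw [intervalIntegral.integral_sub, intervalIntegral.integral_const_mul]
    · exact Continuous.intervalIntegrable (c0.mul (c0.log fun x => (hpos x).ne')) _ _
    · exact Continuous.intervalIntegrable (continuous_const.mul ((c1.pow 2).div c0 fun x => (hpos x).ne')) _ _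
  linarith

/-- slicing the unit cube -/
theorem cube_slice (d : ℕ) (F : (Fin (d + 1) → ℝ) → ℝ) (hF : Continuous F) :
    ∫ x in Set.Icc (0 : Fin (d + 1) → ℝ) 1, F x =
      ∫ s in (0:ℝ)..1, ∫ y in Set.Icc (0 : Fin d → ℝ) 1, F (Fin.cons s y) := by
  have mp := (volume_preserving_piFinSuccAbove (fun _ : Fin (d + 1) => ℝ) 0).symm
  have := mp.setIntegral_preimage_emb (MeasurableEquiv.measurableEmbedding _) F (Set.Icc (0 : Fin (d + 1) → ℝ) 1)
  rw [← this]
  have hs : (MeasurableEquiv.piFinSuccAbove (fun _ : Fin (d + 1) => ℝ) 0).symm ⁻¹' (Set.Icc (0 : Fin (d + 1) → ℝ) 1)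
      = Icc (0:ℝ) 1 ×ˢ Icc (0 : Fin d → ℝ) 1 := by
    ext p
    simp [MeasurableEquiv.piFinSuccAbove, Fin.insertNthEquiv, Pi.le_def, Fin.forall_fin_succ]
    simp only [Prod.le_def, Pi.le_def]
    simp
  have hc : Continuous (fun p : ℝ × (Fin d → ℝ) => F (Fin.cons p.1 p.2)) := by
    fun_prop
  rw [hs]
  have e : ∀ p : ℝ × (Fin d → ℝ), (MeasurableEquiv.piFinSuccAbove (fun _ : Fin (d + 1) => ℝ) 0).symm p
      = Fin.cons p.1 p.2 := fun p => by
    simp [MeasurableEquiv.piFinSuccAbove, Fin.insertNthEquiv]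
  simp only [e]
  rw [Measure.volume_eq_prod, setIntegral_prod _ (hc.continuousOn.integrableOn_compact (isCompact_Icc.prod isCompact_Icc))]
  rw [intervalIntegral.integral_of_le zero_le_one, integral_Icc_eq_integral_Ioc]

theorem hasDerivAt_cons (d : ℕ) (y : Fin d → ℝ) (s : ℝ) :
    HasDerivAt (fun r => (Fin.cons r y : Fin (d + 1) → ℝ)) (Pi.single 0 1) s := by
  rw [hasDerivAt_pi]
  intro i
  refine Fin.cases ?_ (fun j => ?_) i
  · simpa using hasDerivAt_id' s
  · simpa using hasDerivAt_const s (y j)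

theorem hasDerivAt_slice (d : ℕ) (F : (Fin (d + 1) → ℝ) → ℝ) (hF : ContDiff ℝ (⊤ : ℕ∞) F)
    (y : Fin d → ℝ) (s : ℝ) :
    HasDerivAt (fun r => F (Fin.cons r y)) (fderiv ℝ F (Fin.cons s y) (Pi.single 0 1)) s := by
  have h := ((hF.differentiable (by simp)) (Fin.cons s y)).hasFDerivAt
  exact h.comp_hasDerivAt s (hasDerivAt_cons d y s)

theorem contDiff_partial (d : ℕ) (F : (Fin d → ℝ) → ℝ) (hF : ContDiff ℝ (⊤ : ℕ∞) F) (v : Fin d → ℝ) :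
    ContDiff ℝ (⊤ : ℕ∞) (fun x => fderiv ℝ F x v) :=
  (hF.fderiv_right (m := (⊤ : ℕ∞)) (by simp)).clm_apply contDiff_const

theorem hasDerivAt_slice_int (d : ℕ) (F : (Fin (d + 1) → ℝ) → ℝ) (hF : ContDiff ℝ (⊤ : ℕ∞) F) (s : ℝ) :
    HasDerivAt (fun r => ∫ y in Set.Icc (0 : Fin d → ℝ) 1, F (Fin.cons r y))
      (∫ y in Set.Icc (0 : Fin d → ℝ) 1, fderiv ℝ F (Fin.cons s y) (Pi.single 0 1)) s := by
  have hc := hF.continuous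
  have hc' := (contDiff_partial _ F hF (Pi.single 0 1)).continuous
  refine hasDerivAt_setIntegral_cont volume _ isCompact_Icc measurableSet_Icc
    (fun r y => F (Fin.cons r y)) (fun r y => fderiv ℝ F (Fin.cons r y) (Pi.single 0 1)) ?_ ?_ ?_ s
  · intro s
    fun_prop
  · exact hc'.comp (by fun_prop : Continuous (fun p : ℝ × (Fin d → ℝ) => (Fin.cons p.1 p.2 : Fin (d + 1) → ℝ)))
  · exact fun s y => hasDerivAt_slice d F hF y s

theorem contDiff_slice_int (d : ℕ) (n : ℕ) : ∀ (F : (Fin (d + 1) → ℝ) → ℝ) (_ : ContDiff ℝ (⊤ : ℕ∞) F),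
    ContDiff ℝ n (fun r => ∫ y in Set.Icc (0 : Fin d → ℝ) 1, F (Fin.cons r y)) := by
  induction n with
  | zero =>
    intro F hF
    rw [Nat.cast_zero, contDiff_zero]
    exact continuous_iff_continuousAt.2 fun x => (hasDerivAt_slice_int d F hF x).continuousAt
  | succ n ih =>
    intro F hF
    rw [Nat.cast_succ, contDiff_succ_iff_deriv]
    refine ⟨fun x => (hasDerivAt_slice_int d F hF x).differentiableAt, by simp, ?_⟩
    have : deriv (fun r => ∫ y in Set.Icc (0 : Fin d → ℝ) 1, F (Fin.cons r y)) =
      fun r => ∫ y in Set.Icc (0 : Fin d → ℝ) 1, fderiv ℝ F (Fin.cons r y) (Pi.single 0 1) :=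
      funext fun s => (hasDerivAt_slice_int d F hF s).deriv
    rw [this]
    exact ih _ (contDiff_partial _ F hF _)

theorem fderiv_slice (d : ℕ) (F : (Fin (d + 1) → ℝ) → ℝ) (hF : ContDiff ℝ (⊤ : ℕ∞) F) (s : ℝ)
    (y : Fin d → ℝ) (α : Fin d) :
    fderiv ℝ (fun y => F (Fin.cons s y)) y (Pi.single α 1) =
      fderiv ℝ F (Fin.cons s y) (Pi.single α.succ 1) := by
  have h := ((hF.differentiable (by simp)) (Fin.cons s y)).hasFDerivAt
  have h1 : HasDerivAt (fun r : ℝ => (Fin.cons s (y + r • Pi.single α 1) : Fin (d + 1) → ℝ))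
      (Pi.single α.succ 1) 0 := by
    rw [hasDerivAt_pi]
    intro i
    refine Fin.cases ?_ (fun j => ?_) i
    · simpa using hasDerivAt_const (0:ℝ) s
    · have := ((hasDerivAt_id (0:ℝ)).mul_const ((Pi.single α 1 : Fin d → ℝ) j)).const_add (y j)
      simp only [Fin.cons_succ, Pi.add_apply, Pi.smul_apply, smul_eq_mul]
      refine HasDerivAt.congr_deriv this ?_
      simp [Pi.single_apply]
  have hG : ContDiff ℝ (⊤ : ℕ∞) (fun y : Fin d → ℝ => F (Fin.cons s y)) := by
    refine hF.comp ?_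
    rw [contDiff_pi]
    intro i
    refine Fin.cases ?_ (fun j => ?_) i
    · simpa using contDiff_const
    · simpa using contDiff_apply ℝ ℝ j
  have h2 := ((hG.differentiable (by simp)) y).hasFDerivAt
  have h3 : HasDerivAt (fun r : ℝ => y + r • (Pi.single α 1 : Fin d → ℝ)) (Pi.single α 1) 0 := by
    simpa using ((hasDerivAt_id (0:ℝ)).smul_const (Pi.single α 1 : Fin d → ℝ)).const_add y
  have e0 : y + (0:ℝ) • (Pi.single α 1 : Fin d → ℝ) = y := by simp
  have k1 := HasFDerivAt.comp_hasDerivAt (l := F) (0:ℝ) (by rw [e0]; exact h) h1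
  have k2 := HasFDerivAt.comp_hasDerivAt (l := fun y : Fin d → ℝ => F (Fin.cons s y)) (0:ℝ) (by rw [e0]; exact h2) h3
  exact k2.unique k1

theorem contDiff_slice (d : ℕ) (F : (Fin (d + 1) → ℝ) → ℝ) (hF : ContDiff ℝ (⊤ : ℕ∞) F) (s : ℝ) :
    ContDiff ℝ (⊤ : ℕ∞) (fun y : Fin d → ℝ => F (Fin.cons s y)) := by
  refine hF.comp ?_
  rw [contDiff_pi]
  intro i
  refine Fin.cases ?_ (fun j => ?_) i
  · simpa using contDiff_const
  · simpa using contDiff_apply ℝ ℝ j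

theorem int_cube {d : ℕ} {F : (Fin d → ℝ) → ℝ} (hF : Continuous F) :
    Integrable F (volume.restrict (Set.Icc (0 : Fin d → ℝ) 1)) :=
  hF.continuousOn.integrableOn_compact isCompact_Icc

theorem cont_slice_int {d : ℕ} {F : (Fin (d + 1) → ℝ) → ℝ} (hF : Continuous F) :
    Continuous (fun s : ℝ => ∫ y in Set.Icc (0 : Fin d → ℝ) 1, F (Fin.cons s y)) := by
  refine continuous_parametric_integral_of_continuous (f := fun (s : ℝ) (y : Fin d → ℝ) => F (Fin.cons s y)) ?_ isCompact_Icc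
  exact hF.comp (by fun_prop : Continuous (fun p : ℝ × (Fin d → ℝ) => (Fin.cons p.1 p.2 : Fin (d + 1) → ℝ)))

theorem cube_vol (d : ℕ) : (volume (Set.Icc (0 : Fin d → ℝ) 1)) = 1 := by
  rw [Real.volume_Icc_pi]; simp

theorem cube_pos {d : ℕ} {F : (Fin d → ℝ) → ℝ} (hF : Continuous F) (hpos : ∀ x, 0 < F x) :
    0 < ∫ y in Set.Icc (0 : Fin d → ℝ) 1, F y := by
  rw [integral_pos_iff_support_of_nonneg (fun x => (hpos x).le) (int_cube hF)]
  have : Function.support F = univ := by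
    ext x; simp [(hpos x).ne']
  rw [this, Measure.restrict_apply_univ, cube_vol]
  exact zero_lt_one

theorem cs_cube {d : ℕ} {a F : (Fin d → ℝ) → ℝ} (ha : Continuous a) (hF : Continuous F)
    (hpos : ∀ x, 0 < F x) :
    (∫ y in Set.Icc (0 : Fin d → ℝ) 1, a y) ^ 2 / (∫ y in Set.Icc (0 : Fin d → ℝ) 1, F y) ≤
      ∫ y in Set.Icc (0 : Fin d → ℝ) 1, a y ^ 2 / F y := by
  have hg := cube_pos hF hpos
  set A := ∫ y in Set.Icc (0 : Fin d → ℝ) 1, a y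
  set g := ∫ y in Set.Icc (0 : Fin d → ℝ) 1, F y
  have h : ∫ y in Set.Icc (0 : Fin d → ℝ) 1, (2 * (A / g) * a y - (A / g) ^ 2 * F y) ≤
      ∫ y in Set.Icc (0 : Fin d → ℝ) 1, a y ^ 2 / F y := by
    refine integral_mono (int_cube (by fun_prop))
      (int_cube ((ha.pow 2).div hF fun x => (hpos x).ne')) fun y => ?_
    have := hpos y
    simp only
    rw [le_div_iff₀ this]
    nlinarith [sq_nonneg (a y - A / g * F y)]
  rw [integral_sub (int_cube (by fun_prop)) (int_cube (by fun_prop)), integral_const_mul,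
    integral_const_mul] at h
  refine le_trans (le_of_eq ?_) h
  change A ^ 2 / g = 2 * (A / g) * A - (A / g) ^ 2 * g
  field_simp
  ring

theorem lsi_cube (d : ℕ) : ∀ (f : (Fin d → ℝ) → ℝ)
    (_ : ContDiff ℝ (⊤ : ℕ∞) f)
    (_ : ∀ (k : Fin d → ℤ) (x : Fin d → ℝ), f (x + fun i => (k i : ℝ)) = f x)
    (_ : ∀ x, 0 < f x),
    (∫ x in Set.Icc (0 : Fin d → ℝ) 1, f x * Real.log (f x)) -
        (∫ x in Set.Icc (0 : Fin d → ℝ) 1, f x) *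
          Real.log (∫ x in Set.Icc (0 : Fin d → ℝ) 1, f x) ≤
      (1 / (8 * π ^ 2)) *
        ∫ x in Set.Icc (0 : Fin d → ℝ) 1,
          ((∑ α, (fderiv ℝ f x (Pi.single α 1)) ^ 2) / f x) := by
  induction d with
  | zero =>
    intro f _ _ _
    have e : ∀ F : (Fin 0 → ℝ) → ℝ, ∫ x in Set.Icc (0 : Fin 0 → ℝ) 1, F x = F 0 := by
      intro F
      have h1 : F = fun _ => F 0 := funext fun x => congrArg F (Subsingleton.elim _ _)
      rw [h1, setIntegral_const, Measure.real, cube_vol]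
      simp
    simp only [e]
    simp
  | succ d ih =>
    intro f hf hper hpos
    have hc := hf.continuous
    have hne : ∀ x, f x ≠ 0 := fun x => (hpos x).ne'
    have hcl : Continuous (fun x => f x * Real.log (f x)) := hc.mul (hc.log hne)
    have hcp : ∀ α, Continuous (fun x => fderiv ℝ f x (Pi.single α 1)) :=
      fun α => (contDiff_partial _ f hf _).continuous
    have hcd0 : Continuous (fun x => (fderiv ℝ f x (Pi.single 0 1)) ^ 2 / f x) := ((hcp 0).pow 2).div hc hne
    have hcS : Continuous (fun x => (∑ α : Fin d, (fderiv ℝ f x (Pi.single α.succ 1)) ^ 2) / f x) :=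
      (continuous_finsetSum _ fun α _ => (hcp α.succ).pow 2).div hc hne
    have hcT : Continuous (fun x => (∑ α, (fderiv ℝ f x (Pi.single α 1)) ^ 2) / f x) :=
      (continuous_finsetSum _ fun α _ => (hcp α).pow 2).div hc hne
    set g : ℝ → ℝ := fun s => ∫ y in Set.Icc (0 : Fin d → ℝ) 1, f (Fin.cons s y) with hg
    have hgs : ContDiff ℝ (⊤ : ℕ∞) g := contDiff_infty.2 fun n => contDiff_slice_int d n f hf
    have hcons : ∀ s, Continuous (fun y : Fin d → ℝ => (Fin.cons s y : Fin (d + 1) → ℝ)) := fun s => by fun_prop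
    have hgpos : ∀ s, 0 < g s := fun s => cube_pos (hc.comp (hcons s)) fun y => hpos _
    have hgper : ∀ s, g (s + 1) = g s := by
      intro s
      simp only [hg]
      congr 1
      ext y
      rw [← hper (Fin.cons 1 0) (Fin.cons s y)]
      congr 1
      ext i
      refine Fin.cases ?_ (fun j => ?_) i <;> simp
    have hgc := hgs.continuous
    have L1 := lsi_one g hgs hgper hgpos
    have hdg : ∀ s, deriv g s = ∫ y in Set.Icc (0 : Fin d → ℝ) 1, fderiv ℝ f (Fin.cons s y) (Pi.single 0 1) :=
      fun s => (hasDerivAt_slice_int d f hf s).deriv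
    have hdgc : Continuous (deriv g) := (contDiff_infty_iff_deriv.1 hgs).2.continuous
    have L1' : ∫ s in (0:ℝ)..1, deriv g s ^ 2 / g s ≤
        ∫ s in (0:ℝ)..1, ∫ y in Set.Icc (0 : Fin d → ℝ) 1,
          (fderiv ℝ f (Fin.cons s y) (Pi.single 0 1)) ^ 2 / f (Fin.cons s y) := by
      refine intervalIntegral.integral_mono zero_le_one
        (((hdgc.pow 2).div hgc fun s => (hgpos s).ne').intervalIntegrable _ _)
        ((cont_slice_int hcd0).intervalIntegrable _ _) fun s => ?_
      simp only [hdg]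
      exact cs_cube ((hcp 0).comp (hcons s)) (hc.comp (hcons s)) fun y => hpos _
    have hgl : Continuous (fun s => g s * Real.log (g s)) := hgc.mul (hgc.log fun s => (hgpos s).ne')
    have L2 : ∫ s in (0:ℝ)..1, ((∫ y in Set.Icc (0 : Fin d → ℝ) 1, f (Fin.cons s y) * Real.log (f (Fin.cons s y)))
          - g s * Real.log (g s)) ≤
        ∫ s in (0:ℝ)..1, (1 / (8 * π ^ 2)) * ∫ y in Set.Icc (0 : Fin d → ℝ) 1,
          (∑ α : Fin d, (fderiv ℝ f (Fin.cons s y) (Pi.single α.succ 1)) ^ 2) / f (Fin.cons s y) := by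
      refine intervalIntegral.integral_mono zero_le_one
        (((cont_slice_int hcl).sub hgl).intervalIntegrable _ _)
        ((continuous_const.mul (cont_slice_int hcS)).intervalIntegrable _ _) fun s => ?_
      have := ih (fun y => f (Fin.cons s y)) (contDiff_slice d f hf s) ?_ (fun y => hpos _)
      · simp only [fderiv_slice d f hf] at this
        exact this
      · intro k y
        rw [← hper (Fin.cons 0 k) (Fin.cons s y)]
        congr 1
        ext i
        refine Fin.cases ?_ (fun j => ?_) i <;> simp
    rw [intervalIntegral.integral_sub ((cont_slice_int hcl).intervalIntegrable _ _) (hgl.intervalIntegrable _ _),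
      intervalIntegral.integral_const_mul] at L2
    rw [cube_slice d _ hcl, cube_slice d _ hc, cube_slice d _ hcT]
    have hsplit : ∫ s in (0:ℝ)..1, ∫ y in Set.Icc (0 : Fin d → ℝ) 1,
          (∑ α, (fderiv ℝ f (Fin.cons s y) (Pi.single α 1)) ^ 2) / f (Fin.cons s y) =
        (∫ s in (0:ℝ)..1, ∫ y in Set.Icc (0 : Fin d → ℝ) 1,
          (fderiv ℝ f (Fin.cons s y) (Pi.single 0 1)) ^ 2 / f (Fin.cons s y)) +
        ∫ s in (0:ℝ)..1, ∫ y in Set.Icc (0 : Fin d → ℝ) 1,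
          (∑ α : Fin d, (fderiv ℝ f (Fin.cons s y) (Pi.single α.succ 1)) ^ 2) / f (Fin.cons s y) := by
      rw [← intervalIntegral.integral_add ((cont_slice_int hcd0).intervalIntegrable _ _)
        ((cont_slice_int hcS).intervalIntegrable _ _)]
      refine intervalIntegral.integral_congr fun s _ => ?_
      refine Eq.trans ?_ (integral_add (int_cube (hcd0.comp (hcons s))) (int_cube (hcS.comp (hcons s))))
      congr 1
      ext y
      simp only [Fin.sum_univ_succ, add_div, Function.comp]
    rw [hsplit]
    have L1'' := mul_le_mul_of_nonneg_left L1' (by positivity : 0 ≤ 1 / (8 * π ^ 2))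
    rw [mul_add]
    linarith

/-- `a log (a/m) - a + m ≥ 0`. -/
theorem ent_pt {a m : ℝ} (ha : 0 < a) (hm : 0 < m) :
    0 ≤ a * Real.log a - a * Real.log m - a + m := by
  have h := Real.log_le_sub_one_of_pos (div_pos hm ha)
  rw [Real.log_div hm.ne' ha.ne'] at h
  have h2 := mul_le_mul_of_nonneg_left h ha.le
  have : a * (m / a - 1) = m - a := by field_simp
  linarith

/-- a probability density `ρ` on the torus `T^d` with `1/λ ≤ ρ ≤ λ`
satisfies a logarithmic Sobolev inequality with constant `λ²/(8π²)`.
The torus is modeled by `ℤ^d`-periodic functions on `ℝ^d` and densities are with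
respect to Lebesgue measure on `[0,1]^d`. -/
theorem density_logSobolev (d : ℕ) (lam : ℝ) (hlam : 1 < lam)
    (ρ : (Fin d → ℝ) → ℝ)
    (hρ_meas : Measurable ρ)
    (hρ_per : ∀ (k : Fin d → ℤ) (x : Fin d → ℝ), ρ (x + fun i => (k i : ℝ)) = ρ x)
    (hρ_bounds : ∀ x, 1 / lam ≤ ρ x ∧ ρ x ≤ lam)
    (hρ_prob : ∫ x in Set.Icc (0 : Fin d → ℝ) 1, ρ x = 1)
    (f : (Fin d → ℝ) → ℝ)
    (hf_smooth : ContDiff ℝ (⊤ : ℕ∞) f)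
    (hf_per : ∀ (k : Fin d → ℤ) (x : Fin d → ℝ), f (x + fun i => (k i : ℝ)) = f x)
    (hf_pos : ∀ x, 0 < f x) :
    (∫ x in Set.Icc (0 : Fin d → ℝ) 1, f x * Real.log (f x) * ρ x) -
        (∫ x in Set.Icc (0 : Fin d → ℝ) 1, f x * ρ x) *
          Real.log (∫ x in Set.Icc (0 : Fin d → ℝ) 1, f x * ρ x) ≤
      (lam ^ 2 / (8 * π ^ 2)) *
        ∫ x in Set.Icc (0 : Fin d → ℝ) 1,
          ((∑ α, (fderiv ℝ f x (Pi.single α 1)) ^ 2) / f x) * ρ x := by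
  have hl0 : 0 < lam := zero_lt_one.trans hlam
  have hρ0 : ∀ x, 0 ≤ ρ x := fun x => le_trans (by positivity) (hρ_bounds x).1
  have hc := hf_smooth.continuous
  have hne : ∀ x, f x ≠ 0 := fun x => (hf_pos x).ne'
  have hcl : Continuous (fun x => f x * Real.log (f x)) := hc.mul (hc.log hne)
  have hcT : Continuous (fun x => (∑ α, (fderiv ℝ f x (Pi.single α 1)) ^ 2) / f x) :=
    (continuous_finsetSum _ fun α _ => ((contDiff_partial _ f hf_smooth _).continuous).pow 2).div hc hne
  have hIntg : ∀ F : (Fin d → ℝ) → ℝ, Continuous F →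
      Integrable (fun x => F x * ρ x) (volume.restrict (Set.Icc (0 : Fin d → ℝ) 1)) := fun F hF =>
    (int_cube hF).mul_bdd (c := lam) hρ_meas.aestronglyMeasurable (ae_of_all _ fun x => by
      rw [Real.norm_of_nonneg (hρ0 x)]; exact (hρ_bounds x).2)
  have L := lsi_cube d f hf_smooth hf_per hf_pos
  set T : (Fin d → ℝ) → ℝ := fun x => (∑ α, (fderiv ℝ f x (Pi.single α 1)) ^ 2) / f x with hT
  have hT0 : ∀ x, 0 ≤ T x := fun x => div_nonneg (Finset.sum_nonneg fun _ _ => sq_nonneg _) (hf_pos x).le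
  have hm := cube_pos hc hf_pos
  set m := ∫ x in Set.Icc (0 : Fin d → ℝ) 1, f x with hmdef
  have hM : 0 < ∫ x in Set.Icc (0 : Fin d → ℝ) 1, f x * ρ x := by
    have h : ∫ x in Set.Icc (0 : Fin d → ℝ) 1, f x * (1 / lam) ≤
        ∫ x in Set.Icc (0 : Fin d → ℝ) 1, f x * ρ x :=
      integral_mono (int_cube (by fun_prop)) (hIntg f hc)
        fun x => mul_le_mul_of_nonneg_left (hρ_bounds x).1 (hf_pos x).le
    rw [integral_mul_const] at h
    exact lt_of_lt_of_le (by positivity) h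
  set M := ∫ x in Set.Icc (0 : Fin d → ℝ) 1, f x * ρ x with hMdef
  have s1 := ent_pt hM hm
  have hcE : Continuous (fun x => f x * Real.log (f x) - f x * Real.log m - f x + m) := by fun_prop
  have s2 : ∫ x in Set.Icc (0 : Fin d → ℝ) 1, (f x * Real.log (f x) - f x * Real.log m - f x + m) * ρ x ≤
      ∫ x in Set.Icc (0 : Fin d → ℝ) 1, (f x * Real.log (f x) - f x * Real.log m - f x + m) * lam :=
    integral_mono (hIntg _ hcE) (int_cube (by fun_prop))
      fun x => mul_le_mul_of_nonneg_left (hρ_bounds x).2 (ent_pt (hf_pos x) hm)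
  have e1 : ∫ x in Set.Icc (0 : Fin d → ℝ) 1, (f x * Real.log (f x) - f x * Real.log m - f x + m) * ρ x =
      (∫ x in Set.Icc (0 : Fin d → ℝ) 1, f x * Real.log (f x) * ρ x) - M * Real.log m - M + m := by
    have i1 := hIntg _ hcl
    have i2 := (hIntg f hc).mul_const (Real.log m)
    have i3 := hIntg f hc
    have i4 := hIntg (fun _ => m) continuous_const
    have : ∀ x, (f x * Real.log (f x) - f x * Real.log m - f x + m) * ρ x =
      f x * Real.log (f x) * ρ x - f x * ρ x * Real.log m - f x * ρ x + m * ρ x := fun x => by ring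
    simp only [this]
    have i12 : Integrable (fun x => f x * Real.log (f x) * ρ x - f x * ρ x * Real.log m)
      (volume.restrict (Set.Icc (0 : Fin d → ℝ) 1)) := i1.sub i2
    have i123 : Integrable (fun x => f x * Real.log (f x) * ρ x - f x * ρ x * Real.log m - f x * ρ x)
      (volume.restrict (Set.Icc (0 : Fin d → ℝ) 1)) := i12.sub i3
    rw [integral_add i123 i4, integral_sub i12 i3, integral_sub i1 i2,
      integral_mul_const, integral_const_mul, hρ_prob, mul_one]
  have e2 : ∫ x in Set.Icc (0 : Fin d → ℝ) 1, (f x * Real.log (f x) - f x * Real.log m - f x + m) * lam =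
      ((∫ x in Set.Icc (0 : Fin d → ℝ) 1, f x * Real.log (f x)) - m * Real.log m) * lam := by
    have i1 := int_cube hcl
    have i3 := int_cube hc
    have i2 := i3.mul_const (Real.log m)
    have i4 := int_cube (d := d) (F := fun _ => m) continuous_const
    have i12 : Integrable (fun x => f x * Real.log (f x) - f x * Real.log m)
      (volume.restrict (Set.Icc (0 : Fin d → ℝ) 1)) := i1.sub i2
    have i123 : Integrable (fun x => f x * Real.log (f x) - f x * Real.log m - f x)
      (volume.restrict (Set.Icc (0 : Fin d → ℝ) 1)) := i12.sub i3
    rw [integral_mul_const, integral_add i123 i4, integral_sub i12 i3,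
      integral_sub i1 i2, integral_mul_const, setIntegral_const, Measure.real, cube_vol]
    simp [← hmdef]
  have s3 : ∫ x in Set.Icc (0 : Fin d → ℝ) 1, T x ≤ lam * ∫ x in Set.Icc (0 : Fin d → ℝ) 1, T x * ρ x := by
    rw [← integral_const_mul]
    refine integral_mono (int_cube hcT) ((hIntg T hcT).const_mul lam) fun x => ?_
    have h1 : 1 ≤ lam * ρ x := by
      have := (hρ_bounds x).1
      rw [div_le_iff₀ hl0] at this
      linarith
    have := mul_le_mul_of_nonneg_left h1 (hT0 x)
    simp only
    linarith
  have s4 : ((∫ x in Set.Icc (0 : Fin d → ℝ) 1, f x * Real.log (f x)) - m * Real.log m) * lam ≤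
      (1 / (8 * π ^ 2) * (lam * ∫ x in Set.Icc (0 : Fin d → ℝ) 1, T x * ρ x)) * lam :=
    mul_le_mul_of_nonneg_right (L.trans (mul_le_mul_of_nonneg_left s3 (by positivity))) hl0.le
  have e3 : (1 / (8 * π ^ 2) * (lam * ∫ x in Set.Icc (0 : Fin d → ℝ) 1, T x * ρ x)) * lam =
      lam ^ 2 / (8 * π ^ 2) * ∫ x in Set.Icc (0 : Fin d → ℝ) 1, T x * ρ x := by ring
  linarith

end
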